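/- Let 0 < λ ≤ 1 and suppose F is a normalized close-to-convex function on U. Then the function f defined by f(z) = (1/λ) z^{1 - 1/λ} ∫_0^z t^{1/λ - 2} F(t) dt is close-to-convex on U; equivalently, if (1-λ) f(z) + λ z f'(z) is close-to-convex, then so is f. -/

import Mathlib

open Complex MeasureTheory

noncomputable section

def unitDisk : Set ℂ := Metric.ball 0 1

def Normalized (f : ℂ → ℂ) : Prop := f 0 = 0 ∧ deriv f 0 = 1

def StarlikeOfOrder (a : ℝ) (g : ℂ → ℂ) : Prop :=
  ∀ z ∈ unitDisk, z ≠ 0 → a < (z * deriv g z / g z).re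

def Starlike (g : ℂ → ℂ) : Prop := StarlikeOfOrder 0 g

def CloseToConvex (f : ℂ → ℂ) : Prop :=
  AnalyticOn ℂ f unitDisk ∧ Normalized f ∧
  ∃ g : ℂ → ℂ, AnalyticOn ℂ g unitDisk ∧ Normalized g ∧ Set.InjOn g unitDisk ∧
    Starlike g ∧ ∀ z ∈ unitDisk, z ≠ 0 → 0 < (z * deriv f z / g z).re

def Subordinate (f g : ℂ → ℂ) : Prop :=
  ∃ w : ℂ → ℂ, AnalyticOn ℂ w unitDisk ∧ w 0 = 0 ∧
    (∀ z ∈ unitDisk, w z ∈ unitDisk) ∧ ∀ z ∈ unitDisk, f z = g (w z)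

def eps (k : ℕ) : ℂ := Complex.exp (2 * Real.pi * Complex.I / k)

def gk (k : ℕ) (g : ℂ → ℂ) (z : ℂ) : ℂ :=
  ∏ v ∈ Finset.range k, (eps k) ^ (-(v : ℤ)) * g ((eps k) ^ v * z)

def Ks (k : ℕ) (l m : ℝ) (φ : ℂ → ℂ) (f : ℂ → ℂ) : Prop :=
  ∃ g : ℂ → ℂ, AnalyticOn ℂ g unitDisk ∧ Normalized g ∧
    StarlikeOfOrder ((k - 1 : ℝ) / k) g ∧
    Subordinate (fun z => (z ^ k * deriv f z
      + z ^ (k + 1) * iteratedDeriv 2 f z * ((l : ℂ) - m + 2 * l * m)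
      + (l : ℂ) * m * z ^ (k + 2) * iteratedDeriv 3 f z) / gk k g z) φ

/-!
Let `F` be close-to-convex with respect to the starlike function `g`, and let `h` be the Bernardi
transform of `g`, obtained by dividing Taylor coefficients: `(1 - l) h + l z h' = g`.

`h` is starlike: if `g / h` violated `Re (g / h) > 1 - l`, look at a violation of least modulus.
There `h / g` lies on the boundary of the domain `(1 - l) |w|² < Re w` and `z (h / g)'` points along
the outward normal, which contradicts the differential equation since `Re (z g' / g) > 0`. The
argument runs with `h / g` because `h` might vanish, so that `z h' / h` is not available beforehand.
Univalence of `h` follows since `ζ ↦ log h(e^ζ)` has derivative of positive real part on a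
half-plane.

Differentiating `F = (1 - l) f + l z f'` shows that `p = z f' / h` satisfies
`p + l (h / g) z p' = z F' / g`. As `Re (h / g) ≥ 0`, the same contact argument, now for the
right half-plane, gives `Re p > 0`.
-/

section BoundaryContact

open Metric Set

variable {E : Type*} [NormedAddCommGroup E] [NormedSpace ℝ E]

theorem exists_isMinOn_closedBall_of_nonpos [ProperSpace E] {φ : E → ℝ} {R : ℝ} {x₁ : E}
    (hφ : ContinuousOn φ (ball 0 R)) (h0 : 0 < φ 0) (hx₁ : x₁ ∈ ball 0 R) (hφx₁ : φ x₁ ≤ 0) :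
    ∃ x ∈ ball 0 R, φ x = 0 ∧ IsMinOn φ (closedBall 0 ‖x‖) x := by
  rw [mem_ball_zero_iff] at hx₁
  have hφ' : ContinuousOn φ (closedBall 0 ‖x₁‖) := hφ.mono (closedBall_subset_ball hx₁)
  have compact : IsCompact (closedBall 0 ‖x₁‖ ∩ φ ⁻¹' Iic 0) :=
    (isCompact_closedBall 0 ‖x₁‖).of_isClosed_subset
      (hφ'.preimage_isClosed_of_isClosed isClosed_closedBall isClosed_Iic) inter_subset_left
  obtain ⟨x, ⟨hx, hφx⟩, hmin⟩ := compact.exists_isMinOn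
    ⟨x₁, mem_closedBall_zero_iff.2 le_rfl, hφx₁⟩ continuous_norm.continuousOn
  rw [mem_closedBall_zero_iff] at hx
  rw [mem_preimage, mem_Iic] at hφx
  have norm_ne_zero : ‖x‖ ≠ 0 := by
    intro hx0
    exact h0.not_ge (norm_eq_zero.1 hx0 ▸ hφx)
  have nonneg_of_norm_lt : ∀ y ∈ ball 0 ‖x‖, 0 ≤ φ y := by
    intro y hy
    rw [mem_ball_zero_iff] at hy
    by_contra! hφy
    exact hy.not_ge (hmin ⟨mem_closedBall_zero_iff.2 (hy.le.trans hx), hφy.le⟩)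
  have nonneg_of_norm_le : ∀ y ∈ closedBall 0 ‖x‖, 0 ≤ φ y := by
    have hclosure : closure (ball (0 : E) ‖x‖) = closedBall 0 ‖x‖ := closure_ball 0 norm_ne_zero
    rw [← hclosure]
    exact le_on_closure nonneg_of_norm_lt continuousOn_const
      (hclosure ▸ hφ'.mono (closedBall_subset_closedBall hx))
  have φ_eq_zero : φ x = 0 :=
    hφx.antisymm (nonneg_of_norm_le x (mem_closedBall_zero_iff.2 le_rfl))
  exact ⟨x, mem_ball_zero_iff.2 (hx.trans_lt hx₁), φ_eq_zero,
    fun y hy => φ_eq_zero.trans_le (nonneg_of_norm_le y hy)⟩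

theorem apply_le_apply_of_isMinOn_of_convex {φ : E → ℝ} {L : E →L[ℝ] ℝ} {s : Set E} {x y : E}
    (hmin : IsMinOn φ s x) (hL : HasFDerivAt φ L x) (hs : Convex ℝ s) (hx : x ∈ s) (hy : y ∈ s) :
    L x ≤ L y := by
  have nonneg : 0 ≤ L (y - x) := hmin.localize.hasFDerivWithinAt_nonneg hL.hasFDerivWithinAt
    (sub_mem_posTangentConeAt_of_segment_subset (hs.segment_subset hx hy))
  rwa [map_sub, sub_nonneg] at nonneg

theorem eq_neg_norm_of_forall_re_le {a : ℂ} (h : ∀ u : ℂ, ‖u‖ ≤ 1 → a.re ≤ (a * u).re) :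
    a = -‖a‖ := by
  have re_le : a.re ≤ -‖a‖ := by
    have norm_le_one : ‖-(starRingEnd ℂ a / ‖a‖)‖ ≤ 1 := by
      simpa using div_self_le_one ‖a‖
    have mul_eq : a * -(starRingEnd ℂ a / ‖a‖) = ((-‖a‖ : ℝ) : ℂ) := by
      rw [mul_neg, ← mul_div_assoc, mul_conj, normSq_eq_norm_sq, sq]
      push_cast
      rw [mul_self_div_self]
    simpa only [mul_eq, ofReal_re] using h _ norm_le_one
  have re_eq : a.re = -‖a‖ := re_le.antisymm (neg_le_of_abs_le (abs_re_le_norm a))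
  have im_eq : a.im = 0 := abs_re_eq_norm.1 (by rw [re_eq, abs_neg, abs_norm])
  exact Complex.ext (by simpa using re_eq) (by simpa using im_eq)

theorem exists_boundary_contact {p n : ℂ → ℂ} {ρ : ℂ → ℝ} {R : ℝ} {z₁ : ℂ}
    (hp : DifferentiableOn ℂ p (ball 0 R)) (hρ : ∀ w, HasGradientAt ρ (n w) w)
    (h0 : 0 < ρ (p 0)) (hz₁ : z₁ ∈ ball 0 R) (hρz₁ : ρ (p z₁) ≤ 0) :
    ∃ z ∈ ball 0 R, z ≠ 0 ∧ ρ (p z) = 0 ∧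
      ∃ m : ℝ, 0 ≤ m ∧ starRingEnd ℂ (n (p z)) * (z * deriv p z) = -m := by
  have hρp : ContinuousOn (ρ ∘ p) (ball 0 R) :=
    Continuous.comp_continuousOn
      (continuous_iff_continuousAt.2 fun w => (hρ w).hasFDerivAt.continuousAt) hp.continuousOn
  obtain ⟨z, hz, hρz, hmin⟩ := exists_isMinOn_closedBall_of_nonpos hρp h0 hz₁ hρz₁
  refine ⟨z, hz, ?_, hρz, _, norm_nonneg _, eq_neg_norm_of_forall_re_le fun u hu => ?_⟩
  · rintro rfl
    exact h0.ne' hρz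
  · have hasFDerivAt := (hρ (p z)).hasFDerivAt.comp z
      (hp.differentiableAt (isOpen_ball.mem_nhds hz)).hasDerivAt.complexToReal_fderiv
    have hzu : z * u ∈ closedBall 0 ‖z‖ := by
      rw [mem_closedBall_zero_iff, norm_mul]
      exact mul_le_of_le_one_right (norm_nonneg z) hu
    have key := apply_le_apply_of_isMinOn_of_convex hmin hasFDerivAt (convex_closedBall 0 ‖z‖)
      (mem_closedBall_zero_iff.2 le_rfl) hzu
    convert key using 1 <;> simp [Complex.inner] <;> ring_nf

theorem hasGradientAt_re_sub_mul_norm_sq (c : ℝ) (w : ℂ) :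
    HasGradientAt (fun w : ℂ => w.re - c * ‖w‖ ^ 2) (1 - 2 * c * w) w := by
  rw [hasGradientAt_iff_hasFDerivAt]
  refine (reCLM.hasFDerivAt.sub
    ((hasStrictFDerivAt_norm_sq w).hasFDerivAt.const_mul c)).congr_fderiv ?_
  ext u
  simp only [sub_apply, reCLM_apply, smul_apply, coe_innerSL_apply, Complex.inner, mul_re, conj_re,
    conj_im, mul_neg, sub_neg_eq_add, smul_add, nsmul_eq_mul, Nat.cast_ofNat, smul_eq_mul, map_sub,
    InnerProductSpace.toDual_apply_apply, map_one, mul_one, map_mul, conj_ofReal, re_ofNat,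
    ofReal_re, im_ofNat, neg_zero, ofReal_im, mul_zero, sub_zero, mul_im, zero_mul, add_zero,
    sub_right_inj]
  ring

end BoundaryContact

section DifferentialInequalities

open Metric

variable {p : ℂ → ℂ} {R : ℝ}

theorem re_pos_of_re_add_mul_mul_deriv_pos {V : ℂ → ℂ}
    (hp : DifferentiableOn ℂ p (ball 0 R)) (hp0 : 0 < (p 0).re)
    (hV : ∀ z ∈ ball 0 R, z ≠ 0 → 0 ≤ (V z).re)
    (hpV : ∀ z ∈ ball 0 R, z ≠ 0 → 0 < (p z + V z * (z * deriv p z)).re) :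
    ∀ z ∈ ball 0 R, 0 < (p z).re := by
  by_contra! ⟨z₁, hz₁, hpz₁⟩
  have gradient (w : ℂ) : HasGradientAt re 1 w := by
    simpa using hasGradientAt_re_sub_mul_norm_sq 0 w
  obtain ⟨z, hz, hz0, hre, m, hm, hderiv⟩ :=
    exists_boundary_contact hp gradient hp0 hz₁ hpz₁
  rw [map_one, one_mul] at hderiv
  have contact : (p z + V z * (z * deriv p z)).re = -((V z).re * m) := by
    simp [hderiv, hre]
  exact (hpV z hz hz0).not_ge
    (contact.trans_le (neg_nonpos.2 (mul_nonneg (hV z hz hz0) hm)))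

theorem lt_re_inv_iff {c : ℝ} (hc : 0 ≤ c) (w : ℂ) :
    c < w⁻¹.re ↔ 0 < w.re - c * ‖w‖ ^ 2 := by
  rcases eq_or_ne w 0 with rfl | hw
  · simpa using hc
  · rw [inv_re, lt_div_iff₀ (normSq_pos.2 hw), normSq_eq_norm_sq, sub_pos]

theorem ne_one_of_re_sub_mul_norm_sq_eq_zero {c l m : ℝ} {v d q : ℂ} (hc : 0 ≤ c)
    (hl : 0 < l) (hm : 0 ≤ m) (hq : 0 < q.re)
    (hv : v.re - c * ‖v‖ ^ 2 = 0) (hd : starRingEnd ℂ (1 - 2 * c * v) * d = -m) :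
    c * v + l * d + l * v * q ≠ 1 := by
  intro heq
  have unit : (1 - 2 * c * v) * starRingEnd ℂ (1 - 2 * c * v) = 1 := by
    rw [mul_conj, normSq_apply]
    rw [← normSq_eq_norm_sq, normSq_apply] at hv
    norm_cast
    simp only [ofReal_mul, ofReal_ofNat, sub_re, one_re, mul_re, re_ofNat, ofReal_re, im_ofNat,
      ofReal_im, mul_zero, sub_zero, mul_im, zero_mul, add_zero, sub_im, one_im, zero_sub, mul_neg,
      neg_mul, neg_neg]
    linear_combination -4 * c * hv
  have d_eq : d = -m * (1 - 2 * c * v) := by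
    linear_combination (1 - 2 * c * v) * hd - d * unit
  have key : ‖v‖ ^ 2 * (m * c + q.re) = 0 := by
    have mul_conj_eq : c * (‖v‖ ^ 2 : ℝ) - l * (m * (starRingEnd ℂ v - 2 * c * (‖v‖ ^ 2 : ℝ)))
        + l * ((‖v‖ ^ 2 : ℝ) * q) = starRingEnd ℂ v := by
      rw [← normSq_eq_norm_sq, normSq_eq_conj_mul_self]
      linear_combination starRingEnd ℂ v * heq - l * starRingEnd ℂ v * d_eq
    have re_eq := congrArg re mul_conj_eq
    generalize ‖v‖ ^ 2 = N at *
    simp only [add_re, sub_re, mul_re, ofReal_re, ofReal_im, mul_zero, sub_zero, conj_re, re_ofNat,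
      im_ofNat, mul_im, zero_mul, add_zero, sub_im, conj_im, mul_neg, neg_zero] at re_eq
    apply mul_left_cancel₀ hl.ne'
    linear_combination re_eq + (1 + l * m) * hv
  have v_eq_zero : v = 0 := by
    have : 0 < m * c + q.re := by positivity
    simpa [this.ne'] using key
  have neg : l * -m = 1 := by
    subst v_eq_zero
    rw [d_eq] at heq
    simp only [mul_zero, sub_zero, mul_one, zero_mul, zero_add, add_zero] at heq
    exact_mod_cast heq
  linarith [mul_nonneg hl.le hm]

theorem lt_re_inv_of_mul_add_mul_deriv_eq_one {v q : ℂ → ℂ} {c l : ℝ} (hc : 0 ≤ c) (hl : 0 < l)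
    (hv : DifferentiableOn ℂ v (ball 0 R)) (hv0 : c < (v 0)⁻¹.re)
    (hq : ∀ z ∈ ball 0 R, z ≠ 0 → 0 < (q z).re)
    (heq : ∀ z ∈ ball 0 R, z ≠ 0 → c * v z + l * (z * deriv v z) + l * v z * q z = 1) :
    ∀ z ∈ ball 0 R, c < (v z)⁻¹.re := by
  simp only [lt_re_inv_iff hc] at hv0 ⊢
  by_contra! ⟨z₁, hz₁, hvz₁⟩
  obtain ⟨z, hz, hz0, hcontact, m, hm, hderiv⟩ := exists_boundary_contact hv
    (hasGradientAt_re_sub_mul_norm_sq c) hv0 hz₁ hvz₁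
  exact ne_one_of_re_sub_mul_norm_sq_eq_zero hc hl hm (hq z hz hz0) hcontact hderiv (heq z hz hz0)

theorem add_mul_deriv_eq_div_mul_add {A B : ℂ → ℂ} {z : ℂ} (hA : DifferentiableAt ℂ A z)
    (hB : DifferentiableAt ℂ B z) (hBz : B z ≠ 0) (a : ℂ) :
    A z + a * (z * deriv A z) =
      A z / B z * (B z + a * (z * deriv B z)) + a * (z * deriv (fun w => A w / B w) z) * B z := by
  rw [(hA.hasDerivAt.fun_div hB.hasDerivAt hBz).deriv]
  field_simp
  ring

theorem re_div_pos_of_re_add_mul_deriv_div_pos {A B : ℂ → ℂ} {a : ℂ}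
    (hA : DifferentiableOn ℂ A (ball 0 R)) (hB : DifferentiableOn ℂ B (ball 0 R))
    (hB_ne : ∀ z ∈ ball 0 R, B z ≠ 0) (h0 : 0 < (A 0 / B 0).re)
    (hBre : ∀ z ∈ ball 0 R, z ≠ 0 → 0 ≤ (a * (B z / (B z + a * (z * deriv B z)))).re)
    (hAre : ∀ z ∈ ball 0 R, z ≠ 0 →
      0 < ((A z + a * (z * deriv A z)) / (B z + a * (z * deriv B z))).re) :
    ∀ z ∈ ball 0 R, 0 < (A z / B z).re := by
  refine re_pos_of_re_add_mul_mul_deriv_pos (hA.fun_div hB hB_ne) h0 hBre fun z hz hz0 => ?_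
  have denom_ne : B z + a * (z * deriv B z) ≠ 0 := by
    intro h
    simpa [h] using hAre z hz hz0
  have differentiableAt {D : ℂ → ℂ} (hD : DifferentiableOn ℂ D (ball 0 R)) :
      DifferentiableAt ℂ D z := hD.differentiableAt (isOpen_ball.mem_nhds hz)
  convert hAre z hz hz0 using 2
  rw [add_mul_deriv_eq_div_mul_add (differentiableAt hA) (differentiableAt hB) (hB_ne z hz) a,
    add_div, mul_div_cancel_right₀ _ denom_ne]
  ring

end DifferentialInequalities

section EulerEquation

open Metric

variable {c : ℕ → ℂ} {R r : ℝ} {z : ℂ}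

theorem summable_norm_mul_pow
    (hc : ∀ z ∈ ball (0 : ℂ) R, Summable fun n => c n * z ^ n) (hr0 : 0 ≤ r) (hr : r < R) :
    Summable fun n => ‖c n‖ * r ^ n := by
  have hrR : (r : ℂ) ∈ ball 0 R := by simpa [abs_of_nonneg hr0] using hr
  simpa [abs_of_nonneg hr0] using (hc r hrR).norm

theorem norm_mul_pow_le (hz : z ∈ ball 0 r) (n : ℕ) : ‖c n * z ^ n‖ ≤ ‖c n‖ * r ^ n := by
  rw [norm_mul, norm_pow]
  gcongr
  exact (mem_ball_zero_iff.1 hz).le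

theorem differentiableOn_tsum_mul_pow
    (hc : ∀ z ∈ ball (0 : ℂ) R, Summable fun n => c n * z ^ n) :
    DifferentiableOn ℂ (fun z => ∑' n, c n * z ^ n) (ball 0 R) := by
  intro z hz
  obtain ⟨r, hzr, hrR⟩ := exists_between (mem_ball_zero_iff.1 hz)
  exact ((Complex.differentiableOn_tsum_of_summable_norm
    (summable_norm_mul_pow hc ((norm_nonneg z).trans hzr.le) hrR) (by fun_prop) isOpen_ball
    fun n w hw => norm_mul_pow_le hw n).differentiableAt
      (isOpen_ball.mem_nhds (mem_ball_zero_iff.2 hzr))).differentiableWithinAt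

theorem hasSum_mul_deriv_tsum_mul_pow
    (hc : ∀ z ∈ ball (0 : ℂ) R, Summable fun n => c n * z ^ n) (hz : z ∈ ball 0 R) :
    HasSum (fun n => n * (c n * z ^ n)) (z * deriv (fun w => ∑' n, c n * w ^ n) z) := by
  obtain ⟨r, hzr, hrR⟩ := exists_between (mem_ball_zero_iff.1 hz)
  have hderiv := Complex.hasSum_deriv_of_summable_norm
    (summable_norm_mul_pow hc ((norm_nonneg z).trans hzr.le) hrR) (by fun_prop) isOpen_ball
    (fun n w hw => norm_mul_pow_le hw n) (mem_ball_zero_iff.2 hzr)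
  refine (hderiv.mul_left z).congr_fun ?_
  intro n
  rw [deriv_const_mul_field, deriv_pow_field]
  rcases n with _ | n
  · simp
  · rw [Nat.add_sub_cancel]
    ring

theorem one_le_norm_one_add_mul_natCast {a : ℂ} (ha : 0 ≤ a.re) (n : ℕ) :
    1 ≤ ‖1 + a * n‖ :=
  calc (1 : ℝ) ≤ (1 + a * n).re := by simpa using by positivity
    _ ≤ ‖1 + a * n‖ := re_le_norm _

theorem exists_add_mul_mul_deriv_eq {a : ℂ} {g : ℂ → ℂ} (ha : 0 ≤ a.re)
    (hg : DifferentiableOn ℂ g (ball 0 R)) :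
    ∃ G : ℂ → ℂ, DifferentiableOn ℂ G (ball 0 R) ∧
      ∀ z ∈ ball 0 R, G z + a * (z * deriv G z) = g z := by
  set c : ℕ → ℂ := fun n => (n.factorial : ℂ)⁻¹ * iteratedDeriv n g 0
  have taylor : ∀ z ∈ ball (0 : ℂ) R, HasSum (fun n => c n * z ^ n) (g z) := by
    intro z hz
    refine (Complex.hasSum_taylorSeries_on_ball hg hz).congr_fun fun n => ?_
    rw [sub_zero, smul_eq_mul, smul_eq_mul]
    ring
  have summable : ∀ z ∈ ball (0 : ℂ) R, Summable fun n => c n / (1 + a * n) * z ^ n := by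
    intro z hz
    refine (taylor z hz).summable.norm.of_norm_bounded fun n => ?_
    rw [div_mul_eq_mul_div, norm_div]
    exact div_le_self (norm_nonneg _) (one_le_norm_one_add_mul_natCast ha n)
  refine ⟨fun z => ∑' n, c n / (1 + a * n) * z ^ n, differentiableOn_tsum_mul_pow summable,
    fun z hz => ?_⟩
  have sum := (summable z hz).hasSum.add
    ((hasSum_mul_deriv_tsum_mul_pow summable hz).mul_left a)
  refine sum.unique ((taylor z hz).congr_fun fun n => ?_)
  have ne_zero : 1 + a * n ≠ 0 :=
    norm_pos_iff.1 (one_pos.trans_le (one_le_norm_one_add_mul_natCast ha n))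
  field_simp

end EulerEquation

section Univalence

open Metric Set

theorem injOn_of_convex_of_re_deriv_pos {q q' : ℂ → ℂ} {s : Set ℂ} (hs : Convex ℝ s)
    (hq : ∀ z ∈ s, HasDerivAt q (q' z) z) (hq' : ∀ z ∈ s, 0 < (q' z).re) : InjOn q s := by
  intro a ha b hb hab
  by_contra hne
  have hderiv : ∀ t ∈ Icc (0 : ℝ) 1,
      HasDerivAt (fun t : ℝ => (q (AffineMap.lineMap a b t) / (b - a)).re)
        (q' (AffineMap.lineMap a b t)).re t := by
    intro t ht
    have hq_line := ((hq _ (hs.lineMap_mem ha hb ht)).comp t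
      AffineMap.hasDerivAt_lineMap).div_const (b - a)
    rw [mul_div_cancel_right₀ _ (sub_ne_zero.2 (Ne.symm hne))] at hq_line
    exact reCLM.hasFDerivAt.comp_hasDerivAt t hq_line
  obtain ⟨t, ht, slope⟩ := exists_hasDerivAt_eq_slope _ _ one_pos
    (fun t ht => (hderiv t ht).continuousAt.continuousWithinAt)
    (fun t ht => hderiv t (Ioo_subset_Icc_self ht))
  refine (hq' _ (hs.lineMap_mem ha hb (Ioo_subset_Icc_self ht))).ne' ?_
  simpa [hab] using slope

theorem exists_hasDerivAt_and_exp_eq {G : ℂ → ℂ} {c : ℂ} {R : ℝ}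
    (hG : DifferentiableOn ℂ G (ball c R))
    (hne : ∀ z ∈ ball c R, G z ≠ 0) :
    ∃ h : ℂ → ℂ, ∀ z ∈ ball c R, HasDerivAt h (deriv G z / G z) z ∧ exp (h z) = G z := by
  rcases (ball c R).eq_empty_or_nonempty with hempty | hnonempty
  · exact ⟨0, by simp [hempty]⟩
  have hc : c ∈ ball c R := mem_ball_self (nonempty_ball.1 hnonempty)
  obtain ⟨h, hhc, hh⟩ :=
    ((hG.deriv isOpen_ball).div hG hne).isExactOn_ball.with_val_at c (log (G c))
  refine ⟨h, fun z hz => ⟨hh z hz, ?_⟩⟩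
  have hquot : ∀ z ∈ ball c R, HasDerivAt (fun z => exp (h z) / G z) 0 z := by
    intro z hz
    refine ((hh z hz).cexp.div (hG.differentiableAt (isOpen_ball.mem_nhds hz)).hasDerivAt
      (hne z hz)).congr_deriv ?_
    have := hne z hz
    simp only [Pi.div_apply]
    field_simp
    ring
  have hconst := isOpen_ball.is_const_of_deriv_eq_zero (convex_ball c R).isPreconnected
    (fun z hz => (hquot z hz).differentiableAt.differentiableWithinAt)
    (fun z hz => (hquot z hz).deriv) hz hc
  rw [hhc, exp_log (hne c hc), div_self (hne c hc)] at hconst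
  exact (div_eq_one_iff_eq (hne z hz)).1 hconst

theorem injOn_id_mul_of_re_pos {G : ℂ → ℂ} {R : ℝ} (hG : DifferentiableOn ℂ G (ball 0 R))
    (hne : ∀ z ∈ ball 0 R, G z ≠ 0)
    (hre : ∀ z ∈ ball 0 R, z ≠ 0 → 0 < (1 + z * (deriv G z / G z)).re) :
    InjOn (fun z => z * G z) (ball 0 R) := by
  obtain ⟨h, hh⟩ := exists_hasDerivAt_and_exp_eq hG hne
  let s : Set ℂ := {ζ | exp ζ ∈ ball 0 R}
  let q : ℂ → ℂ := fun ζ => ζ + h (exp ζ)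
  have convex : Convex ℝ s := by
    simpa [s, norm_exp] using (convexOn_exp.comp_linearMap reLm).convex_lt R
  have hq : ∀ ζ ∈ s, HasDerivAt q (1 + exp ζ * (deriv G (exp ζ) / G (exp ζ))) ζ := by
    intro ζ hζ
    rw [mul_comm (exp ζ)]
    exact (hasDerivAt_id ζ).add ((hh _ hζ).1.comp ζ (hasDerivAt_exp ζ))
  have q_injOn : InjOn q s :=
    injOn_of_convex_of_re_deriv_pos convex hq fun ζ hζ => hre _ hζ (exp_ne_zero ζ)
  have exp_q : ∀ ζ ∈ s, exp (q ζ) = exp ζ * G (exp ζ) := by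
    intro ζ hζ
    rw [exp_add, (hh _ hζ).2]
  have exp_eq_of : ∀ α ∈ s, ∀ β ∈ s, exp α * G (exp α) = exp β * G (exp β) → exp α = exp β := by
    intro α hα β hβ hαβ
    rw [← exp_q α hα, ← exp_q β hβ, exp_eq_exp_iff_exists_int] at hαβ
    obtain ⟨k, hk⟩ := hαβ
    have exp_shift : exp (β + k * (2 * Real.pi * I)) = exp β := exp_periodic.int_mul k β
    have shift_mem : β + k * (2 * Real.pi * I) ∈ s := by rwa [mem_ofPred_eq, exp_shift]
    have q_shift : q α = q (β + k * (2 * Real.pi * I)) := by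
      rw [hk]
      simp only [q, exp_shift]
      ring
    rw [q_injOn hα shift_mem q_shift, exp_shift]
  intro a ha b hb hab
  dsimp only at hab
  rcases eq_or_ne a 0 with rfl | ha0
  · simpa [hne b hb, eq_comm] using hab
  rcases eq_or_ne b 0 with rfl | hb0
  · simpa [hne a ha] using hab
  obtain ⟨α, rfl⟩ : ∃ α, exp α = a := ⟨log a, exp_log ha0⟩
  obtain ⟨β, rfl⟩ : ∃ β, exp β = b := ⟨log b, exp_log hb0⟩
  exact exp_eq_of α ha β hb hab

end Univalence

section Starlike

open Metric Set

variable {f g G : ℂ → ℂ} {z : ℂ}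

theorem isOpen_unitDisk : IsOpen unitDisk := isOpen_ball

theorem zero_mem_unitDisk : 0 ∈ unitDisk := mem_ball_self one_pos

theorem hasDerivAt_of_mem_unitDisk (hf : DifferentiableOn ℂ f unitDisk) (hz : z ∈ unitDisk) :
    HasDerivAt f (deriv f z) z :=
  (hf.differentiableAt (isOpen_unitDisk.mem_nhds hz)).hasDerivAt

theorem hasDerivAt_id_mul (hG : DifferentiableAt ℂ G z) :
    HasDerivAt (fun w => w * G w) (G z + z * deriv G z) z := by
  simpa using (hasDerivAt_id z).fun_mul hG.hasDerivAt

theorem mul_deriv_id_mul_div (hG : DifferentiableAt ℂ G z) (hz : z ≠ 0) (hGz : G z ≠ 0) :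
    z * deriv (fun w => w * G w) z / (z * G z) = 1 + z * (deriv G z / G z) := by
  rw [(hasDerivAt_id_mul hG).deriv]
  field_simp

theorem normalized_id_mul (hG : DifferentiableAt ℂ G 0) (hG0 : G 0 = 1) :
    Normalized fun z => z * G z :=
  ⟨zero_mul _, by rw [(hasDerivAt_id_mul hG).deriv, hG0, zero_mul, add_zero]⟩

theorem Normalized.id_mul_dslope (hg : Normalized g) : (fun z => z * dslope g 0 z) = g := by
  funext z
  simpa [hg.1] using sub_smul_dslope g 0 z

theorem Normalized.dslope_zero (hg : Normalized g) : dslope g 0 0 = 1 := by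
  rw [dslope_same, hg.2]

theorem Starlike.ne_zero (hg : Starlike g) (hz : z ∈ unitDisk) (hz0 : z ≠ 0) : g z ≠ 0 := by
  intro hgz
  simpa [hgz] using hg z hz hz0

theorem Starlike.dslope_ne_zero (hg : Starlike g) (hgn : Normalized g) (hz : z ∈ unitDisk) :
    dslope g 0 z ≠ 0 := by
  rcases eq_or_ne z 0 with rfl | hz0
  · exact hgn.dslope_zero ▸ one_ne_zero
  · have := hg.ne_zero hz hz0
    rw [← hgn.id_mul_dslope] at this
    exact right_ne_zero_of_mul this

theorem differentiableOn_dslope_unitDisk (hg : DifferentiableOn ℂ g unitDisk) :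
    DifferentiableOn ℂ (dslope g 0) unitDisk :=
  (Complex.differentiableOn_dslope (isOpen_unitDisk.mem_nhds zero_mem_unitDisk)).2 hg

theorem mul_deriv_div_eq_dslope (hg : DifferentiableOn ℂ g unitDisk) (hgn : Normalized g)
    (hgs : Starlike g) (hz : z ∈ unitDisk) (hz0 : z ≠ 0) :
    z * deriv g z / g z = 1 + z * (deriv (dslope g 0) z / dslope g 0 z) := by
  have := mul_deriv_id_mul_div
    (hasDerivAt_of_mem_unitDisk (differentiableOn_dslope_unitDisk hg) hz).differentiableAt hz0
    (hgs.dslope_ne_zero hgn hz)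
  rwa [hgn.id_mul_dslope, congrFun hgn.id_mul_dslope z] at this

theorem Starlike.injOn (hg : DifferentiableOn ℂ g unitDisk) (hgn : Normalized g)
    (hgs : Starlike g) : InjOn g unitDisk := by
  rw [← hgn.id_mul_dslope]
  refine injOn_id_mul_of_re_pos (differentiableOn_dslope_unitDisk hg)
    (fun z hz => hgs.dslope_ne_zero hgn hz) fun z hz hz0 => ?_
  rw [← mul_deriv_div_eq_dslope hg hgn hgs hz hz0]
  exact hgs z hz hz0

theorem Normalized.div_eq_dslope_div (hf : Normalized f) (hg : Normalized g) (hz : z ≠ 0) :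
    f z / g z = dslope f 0 z / dslope g 0 z := by
  conv_lhs => rw [← hf.id_mul_dslope, ← hg.id_mul_dslope]
  exact mul_div_mul_left _ _ hz

end Starlike

section BernardiTransform

open Metric Set Topology

variable {f F g h : ℂ → ℂ} {l : ℝ} {z : ℂ}

/-- `f` is the Bernardi transform `f(z) = (1/l) z^{1 - 1/l} ∫₀ᶻ t^{1/l - 2} F(t) dt` of `F`. It is
encoded by the differential equation it solves, which involves no branch of a complex power. -/
def IsBernardiTransform (l : ℝ) (f F : ℂ → ℂ) : Prop :=
  ∀ z ∈ unitDisk, F z = (1 - (l : ℂ)) * f z + (l : ℂ) * z * deriv f z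

namespace IsBernardiTransform

theorem deriv_eq (hF : IsBernardiTransform l f F) (hf : DifferentiableOn ℂ f unitDisk)
    (hz : z ∈ unitDisk) :
    deriv F z = deriv f z + l * (z * deriv (deriv f) z) := by
  have eventuallyEq : F =ᶠ[𝓝 z] fun w => (1 - (l : ℂ)) * f w + l * (w * deriv f w) := by
    filter_upwards [isOpen_unitDisk.mem_nhds hz] with w hw
    rw [hF w hw, mul_assoc (l : ℂ)]
  have hf' := (hasDerivAt_of_mem_unitDisk (hf.deriv isOpen_unitDisk) hz).differentiableAt
  rw [eventuallyEq.deriv_eq, (((hasDerivAt_of_mem_unitDisk hf hz).const_mul _).fun_add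
    ((hasDerivAt_id_mul hf').const_mul _)).deriv]
  ring

theorem div_eq (hg : IsBernardiTransform l h g) (hz : z ∈ unitDisk) (hhz : h z ≠ 0) :
    g z / h z = (1 - l : ℝ) + l * (z * deriv h z / h z) := by
  rw [hg z hz]
  push_cast
  field_simp

theorem dslope_add_mul_deriv_eq (hg : IsBernardiTransform l h g)
    (hh : DifferentiableOn ℂ h unitDisk) (hhn : Normalized h) (hgn : Normalized g)
    (hz : z ∈ unitDisk) :
    dslope h 0 z + l * (z * deriv (dslope h 0) z) = dslope g 0 z := by
  rcases eq_or_ne z 0 with rfl | hz0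
  · simp [hhn.2, hgn.2]
  · have eq := hg z hz
    rw [← congrFun hgn.id_mul_dslope z, ← hhn.id_mul_dslope, (hasDerivAt_id_mul
      (hasDerivAt_of_mem_unitDisk (differentiableOn_dslope_unitDisk hh) hz).differentiableAt).deriv]
      at eq
    apply mul_left_cancel₀ hz0
    linear_combination -eq

theorem one_sub_lt_re_inv_dslope_div (hg : IsBernardiTransform l h g) (hl0 : 0 < l) (hl1 : l ≤ 1)
    (hh : DifferentiableOn ℂ h unitDisk) (hhn : Normalized h)
    (hgd : DifferentiableOn ℂ g unitDisk) (hgn : Normalized g) (hgs : Starlike g) :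
    ∀ z ∈ unitDisk, 1 - l < (dslope h 0 z / dslope g 0 z)⁻¹.re := by
  have hh₁ := differentiableOn_dslope_unitDisk hh
  have hg₁ := differentiableOn_dslope_unitDisk hgd
  have hg₁_ne (z) (hz : z ∈ unitDisk) := hgs.dslope_ne_zero hgn hz
  refine lt_re_inv_of_mul_add_mul_deriv_eq_one (q := fun z => z * deriv g z / g z)
    (sub_nonneg.2 hl1) hl0 (hh₁.fun_div hg₁ hg₁_ne) ?_ hgs fun z hz hz0 => ?_
  · simpa [hhn.2, hgn.2] using hl0
  · have product := add_mul_deriv_eq_div_mul_add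
      (hasDerivAt_of_mem_unitDisk hh₁ hz).differentiableAt
      (hasDerivAt_of_mem_unitDisk hg₁ hz).differentiableAt (hg₁_ne z hz) l
    rw [hg.dslope_add_mul_deriv_eq hh hhn hgn hz] at product
    have hg₁z := hg₁_ne z hz
    rw [mul_deriv_div_eq_dslope hgd hgn hgs hz hz0]
    apply mul_right_cancel₀ hg₁z
    push_cast
    have cancel : deriv (dslope g 0) z / dslope g 0 z * dslope g 0 z = deriv (dslope g 0) z :=
      div_mul_cancel₀ _ hg₁z
    linear_combination -product + l * (dslope h 0 z / dslope g 0 z) * z * cancel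

theorem starlike (hg : IsBernardiTransform l h g) (hl0 : 0 < l) (hl1 : l ≤ 1)
    (hh : DifferentiableOn ℂ h unitDisk) (hhn : Normalized h)
    (hgd : DifferentiableOn ℂ g unitDisk) (hgn : Normalized g) (hgs : Starlike g) :
    Starlike h := by
  intro z hz hz0
  have hlt := hg.one_sub_lt_re_inv_dslope_div hl0 hl1 hh hhn hgd hgn hgs z hz
  rw [← hhn.div_eq_dslope_div hgn hz0] at hlt
  have hhz : h z ≠ 0 := by
    intro hhz
    rw [hhz, zero_div, inv_zero, zero_re] at hlt
    exact hlt.not_ge (sub_nonneg.2 hl1)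
  rw [inv_div, hg.div_eq hz hhz, add_re, ofReal_re, re_ofReal_mul, lt_add_iff_pos_right] at hlt
  exact pos_of_mul_pos_right hlt hl0.le

theorem re_mul_div_nonneg (hg : IsBernardiTransform l h g) (hl0 : 0 ≤ l) (hl1 : l ≤ 1)
    (hhs : Starlike h) (hz : z ∈ unitDisk) (hz0 : z ≠ 0) : 0 ≤ (l * (h z / g z)).re := by
  rw [re_ofReal_mul, ← inv_div, inv_re, hg.div_eq hz (hhs.ne_zero hz hz0), add_re, ofReal_re,
    re_ofReal_mul]
  exact mul_nonneg hl0 (div_nonneg (add_nonneg (sub_nonneg.2 hl1)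
    (mul_nonneg hl0 (hhs z hz hz0).le)) (normSq_nonneg _))

theorem re_mul_deriv_div_pos (hF : IsBernardiTransform l f F) (hg : IsBernardiTransform l h g)
    (hl0 : 0 ≤ l) (hl1 : l ≤ 1) (hf : DifferentiableOn ℂ f unitDisk) (hfn : Normalized f)
    (hh : DifferentiableOn ℂ h unitDisk) (hhn : Normalized h) (hhs : Starlike h)
    (hgn : Normalized g) (hFg : ∀ z ∈ unitDisk, z ≠ 0 → 0 < (z * deriv F z / g z).re) :
    ∀ z ∈ unitDisk, z ≠ 0 → 0 < (z * deriv f z / h z).re := by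
  have mul_div_eq {k : ℂ → ℂ} (hk : Normalized k) {z : ℂ} (hz0 : z ≠ 0) (w : ℂ) :
      z * w / k z = w / dslope k 0 z := by
    rw [← congrFun hk.id_mul_dslope z, mul_div_mul_left _ _ hz0]
  intro z hz hz0
  rw [mul_div_eq hhn hz0]
  refine re_div_pos_of_re_add_mul_deriv_div_pos (a := l) (hf.deriv isOpen_unitDisk)
    (differentiableOn_dslope_unitDisk hh) (fun z hz => hhs.dslope_ne_zero hhn hz) ?_ ?_ ?_ z hz
  · simp [hfn.2, hhn.2]
  · intro z hz hz0
    rw [hg.dslope_add_mul_deriv_eq hh hhn hgn hz, ← hhn.div_eq_dslope_div hgn hz0]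
    exact hg.re_mul_div_nonneg hl0 hl1 hhs hz hz0
  · intro z hz hz0
    rw [hg.dslope_add_mul_deriv_eq hh hhn hgn hz, ← hF.deriv_eq hf hz, ← mul_div_eq hgn hz0]
    exact hFg z hz hz0

end IsBernardiTransform

theorem exists_isBernardiTransform (hl : 0 ≤ l) (hg : DifferentiableOn ℂ g unitDisk)
    (hgn : Normalized g) :
    ∃ h : ℂ → ℂ, DifferentiableOn ℂ h unitDisk ∧ Normalized h ∧ IsBernardiTransform l h g := by
  obtain ⟨H, hH, hHeq⟩ :=
    exists_add_mul_mul_deriv_eq (a := l) hl (differentiableOn_dslope_unitDisk hg)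
  have hHdiff (z) (hz : z ∈ unitDisk) : DifferentiableAt ℂ H z :=
    (hasDerivAt_of_mem_unitDisk hH hz).differentiableAt
  have hH0 : H 0 = 1 := by
    simpa [hgn.2] using hHeq 0 zero_mem_unitDisk
  refine ⟨fun z => z * H z, differentiableOn_id.mul hH,
    normalized_id_mul (hHdiff 0 zero_mem_unitDisk) hH0, fun z hz => ?_⟩
  rw [← congrFun hgn.id_mul_dslope z, ← hHeq z hz, (hasDerivAt_id_mul (hHdiff z hz)).deriv]
  ring

end BernardiTransform

theorem stmt12 (l : ℝ) (h0 : 0 < l) (hl : l ≤ 1)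
    (f F : ℂ → ℂ) (hf : AnalyticOn ℂ f unitDisk) (hfn : Normalized f)
    (hrel : ∀ z ∈ unitDisk, F z = (1 - (l : ℂ)) * f z + (l : ℂ) * z * deriv f z)
    (hF : CloseToConvex F) :
    CloseToConvex f := by
  obtain ⟨-, -, g, hg, hgn, -, hgs, hFg⟩ := hF
  have hfF : IsBernardiTransform l f F := hrel
  have hfd : DifferentiableOn ℂ f unitDisk := hf.differentiableOn
  have hgd : DifferentiableOn ℂ g unitDisk := hg.differentiableOn
  obtain ⟨h, hhd, hhn, hhg⟩ := exists_isBernardiTransform h0.le hgd hgn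
  have hhs : Starlike h := hhg.starlike h0 hl hhd hhn hgd hgn hgs
  exact ⟨hf, hfn, h, (analyticOn_iff_differentiableOn isOpen_unitDisk).2 hhd, hhn,
    hhs.injOn hhd hhn, hhs, hfF.re_mul_deriv_div_pos hhg h0.le hl hfd hfn hhd hhn hhs hgn hFg⟩
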